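/- arXiv:1606.06176 — 2 statements merged into one kernel-verified Lean document; each statement's English description precedes it below -/
import Mathlib

section
/- Fix an integer r ≥ 1 and real numbers ν > 0 and T > 0. There exists a constant C > 0, depending only on r, ν, T, with the following property. Let N ≥ 1, let A, B ≥ 0, and let F : [0,∞) → H^{r+1}(𝕋³) be a continuous family of zero-mean functions (or vector fields) on 𝕋³ satisfying ‖F(s)‖_{L²(𝕋³)} ≤ A e^{−νN²s} and ‖F(s)‖_{H^{r+1}(𝕋³)} ≤ B e^{−νN²s} for all s ≥ 0. Then for every t ≥ T one has ∫₀^t ‖e^{ν(t−s)Δ}F(s)‖_{H^{r+1}(𝕋³)} ds ≤ C (A N^{−2} + B e^{−νN²t/2}). -/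
open MeasureTheory Real Set

noncomputable section

abbrev E3 := Fin 3 → ℝ

def T3 : Set E3 := Set.Icc 0 (fun _ => 2 * Real.pi)

def SpacePeriodic {ι : Type*} (f : E3 → ι) : Prop :=
  ∀ (x : E3) (j : Fin 3), f (x + (2 * Real.pi) • (Pi.single j 1 : E3)) = f x

def pd (j : Fin 3) (f : E3 → ℝ) : E3 → ℝ := fun x => fderiv ℝ f x (Pi.single j 1 : E3)

def pdM (β : Fin 3 → ℕ) (f : E3 → ℝ) : E3 → ℝ :=
  (pd 0)^[β 0] ((pd 1)^[β 1] ((pd 2)^[β 2] f))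

def midx (m : ℕ) : Finset (Fin 3 → ℕ) := Finset.Nat.antidiagonalTuple 3 m

def gradSq {ι : Type*} [Fintype ι] (m : ℕ) (f : E3 → ι → ℝ) (x : E3) : ℝ :=
  ∑ i : ι, ∑ β ∈ midx m, (pdM β (fun y => f y i) x) ^ 2

def HnormSq {ι : Type*} [Fintype ι] (r : ℕ) (f : E3 → ι → ℝ) : ℝ :=
  ∑ m ∈ Finset.range (r + 1), ∫ x in T3, gradSq m f x

def Hnorm {ι : Type*} [Fintype ι] (r : ℕ) (f : E3 → ι → ℝ) : ℝ :=
  Real.sqrt (HnormSq r f)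

def L2norm {ι : Type*} [Fintype ι] (f : E3 → ι → ℝ) : ℝ := Hnorm 0 f

def LinfGrad {ι : Type*} [Fintype ι] (m : ℕ) (f : E3 → ι → ℝ) : ℝ :=
  ⨆ x : E3, Real.sqrt (gradSq m f x)

def Linf {ι : Type*} [Fintype ι] (f : E3 → ι → ℝ) : ℝ := LinfGrad 0 f

def ZeroMean {ι : Type*} [Fintype ι] (f : E3 → ι → ℝ) : Prop :=
  ∀ i, (∫ x in T3, f x i) = 0

def vdiv (u : E3 → E3) : E3 → ℝ := fun x => ∑ j, pd j (fun y => u y j) x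

def vcurl (u : E3 → E3) : E3 → E3 := fun x =>
  ![pd 1 (fun y => u y 2) x - pd 2 (fun y => u y 1) x,
    pd 2 (fun y => u y 0) x - pd 0 (fun y => u y 2) x,
    pd 0 (fun y => u y 1) x - pd 1 (fun y => u y 0) x]

def lap (f : E3 → ℝ) : E3 → ℝ := fun x => ∑ j, pd j (pd j f) x

def IsNS (ν : ℝ) (I : Set ℝ) (u : E3 → ℝ → E3) (P : E3 → ℝ → ℝ) : Prop :=
  (∀ t ∈ I, ∀ (x : E3) (i : Fin 3),
      derivWithin (fun τ => u x τ i) I t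
        + (∑ j, u x t j * pd j (fun y => u y t i) x)
        - ν * lap (fun y => u y t i) x
        = - pd i (fun y => P y t) x) ∧
  (∀ t ∈ I, ∀ x : E3, vdiv (fun y => u y t) x = 0)

def SmoothOnTime (u : E3 → ℝ → E3) (I : Set ℝ) : Prop :=
  ContDiffOn ℝ (⊤ : ℕ∞) (fun p : E3 × ℝ => u p.1 p.2) (Set.univ ×ˢ I)

def wNormInf (m : ℕ) (w : E3 → ℝ → E3) (t : ℝ) : ℝ := LinfGrad m (fun x => w x t)

def Q (w : E3 → ℝ → E3) : ℕ → ℝ → ℝ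
  | 0, _ => 1
  | (j + 1), t => 1 + ∑ m ∈ (Finset.range (j + 1)).attach,
      Q w m.1 t * ∫ τ in (0:ℝ)..t, (wNormInf (j + 1 - m.1) w τ) ^ 2
  decreasing_by exact Finset.mem_range.mp m.2

def Qinf (w : E3 → ℝ → E3) (r : ℕ) : ℝ := ⨆ t : Set.Ici (0:ℝ), Q w r t

/-- The (scaled) heat equation `∂ₜ v = κ Δv` on `𝕋³ × I`. -/
def IsHeat (κ : ℝ) (I : Set ℝ) (v : E3 → ℝ → ℝ) : Prop :=
  ∀ t ∈ I, ∀ x : E3, derivWithin (fun τ => v x τ) I t = κ * lap (fun y => v y t) x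

/-- Sobolev `H^m` norm of a scalar function on `𝕋³`. -/
def Hnorm1 (m : ℕ) (f : E3 → ℝ) : ℝ := Hnorm m (fun x (_ : Fin 1) => f x)

/-- `L²` norm of a scalar function on `𝕋³`. -/
def L2norm1 (f : E3 → ℝ) : ℝ := L2norm (fun x (_ : Fin 1) => f x)

/-!
A solution `u` of the heat equation satisfies the energy identity
`d/dτ ‖u‖² = -2ν ∑ⱼ ‖∂ⱼu‖²` in `L²(𝕋³)`. Since every derivative of `u` is again a solution, all the
norms `‖∂^β u‖` are nonincreasing, and integrating the identity over a time interval of length `h`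
bounds `‖∂ⱼu‖²` at its end by `(2νh)⁻¹ ‖u‖²` at its start. Iterating, the flow maps `L²` to `H^m`
boundedly after any positive time.

In the Duhamel integral, the flow started at `s ≤ t/2` has run for a time at least `T/2`, so its
`H^m` norm is at most a constant times `A e^{-νN²s}`, whose integral is at most `A / (νN²)`. For
`s ≥ t/2` monotonicity gives the bound `B e^{-νN²s}`, whose integral over `[t/2, ∞)` is
`B e^{-νN²t/2} / (νN²)`.
-/

section HeatFlow

open Filter Function Topology
open scoped ContDiff

section Torus

variable {f g : E3 → ℝ}

theorem isCompact_T3 : IsCompact T3 := isCompact_Icc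

theorem measurableSet_T3 : MeasurableSet T3 := measurableSet_Icc

theorem integrableOn_T3 (hf : Continuous f) : IntegrableOn f T3 :=
  hf.continuousOn.integrableOn_compact isCompact_T3

theorem contDiff_pd {m n : ℕ∞ω} (hf : ContDiff ℝ n f) (hmn : m + 1 ≤ n) (j : Fin 3) :
    ContDiff ℝ m (pd j f) :=
  (hf.fderiv_right hmn).clm_apply contDiff_const

theorem continuous_pd (hf : ContDiff ℝ 1 f) (j : Fin 3) : Continuous (pd j f) :=
  (contDiff_pd (m := 0) hf (by simp) j).continuous

theorem pd_const_mul (c : ℝ) (hf : ContDiff ℝ 1 f) (j : Fin 3) :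
    pd j (fun x => c * f x) = fun x => c * pd j f x := by
  funext x
  simp [pd, fderiv_const_mul (hf.differentiable (by simp) x)]

theorem pd_mul (hf : ContDiff ℝ 1 f) (hg : ContDiff ℝ 1 g) (j : Fin 3) :
    pd j (fun x => f x * g x) = fun x => f x * pd j g x + pd j f x * g x := by
  funext x
  simp only [pd, fderiv_fun_mul (hf.differentiable (by simp) x) (hg.differentiable (by simp) x)]
  simp [mul_comm]

theorem pd_comm (hf : ContDiff ℝ 2 f) (i j : Fin 3) : pd i (pd j f) = pd j (pd i f) := by
  funext x
  have hd : DifferentiableAt ℝ (fderiv ℝ f) x :=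
    (hf.fderiv_right (m := 1) (by norm_num)).differentiable (by simp) x
  have hsymm : IsSymmSndFDerivAt ℝ f x := hf.contDiffAt.isSymmSndFDerivAt (by simp)
  change fderiv ℝ (fun y => fderiv ℝ f y _) x _ = fderiv ℝ (fun y => fderiv ℝ f y _) x _
  rw [fderiv_clm_apply hd (by fun_prop), fderiv_clm_apply hd (by fun_prop)]
  simpa using hsymm (Pi.single i 1) (Pi.single j 1)

theorem lap_pd (hf : ContDiff ℝ 3 f) (j : Fin 3) : lap (pd j f) = pd j (lap f) := by
  have hf₂ : ContDiff ℝ 2 f := hf.of_le (by norm_num)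
  have hpd (i : Fin 3) : ContDiff ℝ 2 (pd i f) := contDiff_pd hf (by norm_num) i
  have hpd_pd (i : Fin 3) : Differentiable ℝ (pd i (pd i f)) :=
    (contDiff_pd (m := 1) (hpd i) (by norm_num) i).differentiable (by simp)
  funext x
  calc lap (pd j f) x = ∑ i, pd j (pd i (pd i f)) x :=
        Finset.sum_congr rfl fun i _ => by rw [pd_comm hf₂ i j, pd_comm (hpd i) i j]
    _ = pd j (lap f) x := by
        change _ = fderiv ℝ (fun y => ∑ i, pd i (pd i f) y) x _
        rw [fderiv_fun_sum fun i _ => hpd_pd i x]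
        simp [pd]

protected theorem SpacePeriodic.pd (hf : SpacePeriodic f) (j : Fin 3) : SpacePeriodic (pd j f) := by
  intro x i
  have htranslate : (fun y => f (y + (2 * Real.pi) • (Pi.single i 1 : E3))) = f :=
    funext fun y => hf y i
  simp only [pd]
  rw [← fderiv_comp_add_right, htranslate]

theorem SpacePeriodic.insertNth_two_pi (hf : SpacePeriodic f) (i : Fin 3) (y : Fin 2 → ℝ) :
    f (i.insertNth (2 * Real.pi) y) = f (i.insertNth 0 y) := by
  rw [← hf (i.insertNth 0 y) i]
  congr 1
  funext k
  refine Fin.succAboveCases i ?_ (fun k => ?_) k <;> simp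

theorem integral_pd_eq_zero (hf : ContDiff ℝ 1 f) (hper : SpacePeriodic f) (j : Fin 3) :
    ∫ x in T3, pd j f x = 0 := by
  have hle : (0 : E3) ≤ fun _ => 2 * Real.pi := fun _ => by simp [Real.pi_pos.le]
  have hdiv (x : E3) : ∑ i, (if i = j then fderiv ℝ f x else 0) (Pi.single i 1) = pd j f x := by
    simp [ite_apply, pd, apply_ite]
  have key := integral_divergence_of_hasFDerivAt_off_countable' (n := 2) (0 : E3)
    (fun _ => 2 * Real.pi) hle (fun i x => if i = j then f x else 0)
    (fun i x => if i = j then fderiv ℝ f x else 0) ∅ countable_empty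
    (fun i => by split_ifs; exacts [hf.continuous.continuousOn, continuousOn_const])
    (fun x _ i => by
      split_ifs
      exacts [(hf.differentiable (by simp) x).hasFDerivAt, hasFDerivAt_const _ _])
    (by simp only [hdiv]; exact integrableOn_T3 (continuous_pd hf j))
  simp only [hdiv] at key
  exact key.trans (by simp [hper.insertNth_two_pi])

theorem integral_mul_pd (hf : ContDiff ℝ 1 f) (hg : ContDiff ℝ 1 g) (hf' : SpacePeriodic f)
    (hg' : SpacePeriodic g) (j : Fin 3) :
    ∫ x in T3, f x * pd j g x = -∫ x in T3, pd j f x * g x := by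
  have hzero := integral_pd_eq_zero (hf.mul hg)
    (fun x i => congrArg₂ (· * ·) (hf' x i) (hg' x i)) j
  have hint₁ : IntegrableOn (fun x => f x * pd j g x) T3 :=
    integrableOn_T3 (hf.continuous.mul (continuous_pd hg j))
  have hint₂ : IntegrableOn (fun x => pd j f x * g x) T3 :=
    integrableOn_T3 ((continuous_pd hf j).mul hg.continuous)
  rw [pd_mul hf hg, integral_add hint₁ hint₂] at hzero
  exact eq_neg_of_add_eq_zero_left hzero

theorem integral_mul_lap (hf : ContDiff ℝ 1 f) (hg : ContDiff ℝ 2 g) (hf' : SpacePeriodic f)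
    (hg' : SpacePeriodic g) :
    ∫ x in T3, f x * lap g x = -∑ j, ∫ x in T3, pd j f x * pd j g x := by
  have hpd (j : Fin 3) : ContDiff ℝ 1 (pd j g) := contDiff_pd hg (by norm_num) j
  have hint (j : Fin 3) : IntegrableOn (fun x => f x * pd j (pd j g) x) T3 :=
    integrableOn_T3 (hf.continuous.mul (continuous_pd (hpd j) j))
  simp only [lap, Finset.mul_sum]
  rw [integral_finsetSum _ fun j _ => hint j, ← Finset.sum_neg_distrib]
  exact Finset.sum_congr rfl fun j _ => integral_mul_pd hf (hpd j) hf' (hg'.pd j) j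

end Torus

/-- The squared norm of `L²(𝕋³)`. -/
def L2normSq (f : E3 → ℝ) : ℝ := ∫ x in T3, f x ^ 2

theorem L2normSq_nonneg (f : E3 → ℝ) : 0 ≤ L2normSq f :=
  integral_nonneg fun _ => sq_nonneg _

theorem Hnorm1_nonneg (m : ℕ) (f : E3 → ℝ) : 0 ≤ Hnorm1 m f := Real.sqrt_nonneg _

theorem L2norm1_eq_sqrt (f : E3 → ℝ) : L2norm1 f = √(L2normSq f) := by
  simp [L2norm1, L2norm, Hnorm, HnormSq, gradSq, midx, pdM, L2normSq,
    Finset.Nat.antidiagonalTuple_zero_right]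

theorem Hnorm1_eq_sqrt {m : ℕ} {f : E3 → ℝ} (hf : ∀ β, Continuous (pdM β f)) :
    Hnorm1 m f = √(∑ k ∈ Finset.range (m + 1), ∑ β ∈ midx k, L2normSq (pdM β f)) := by
  simp only [Hnorm1, Hnorm, HnormSq, gradSq, Finset.univ_unique, Finset.sum_singleton, L2normSq]
  congr! 2 with k
  exact integral_finsetSum _ fun β _ => integrableOn_T3 ((hf β).pow 2)

section SpaceTime

variable {E F : Type*} [NormedAddCommGroup E] [NormedSpace ℝ E] [NormedAddCommGroup F]
  [NormedSpace ℝ F] {u : ℝ → E → F} {τ : ℝ} {x : E}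

theorem contDiff_slice {n : ℕ∞ω} (hu : ContDiffOn ℝ n (uncurry u) (Ici 0 ×ˢ univ))
    (hτ : 0 ≤ τ) : ContDiff ℝ n (u τ) := by
  rw [← contDiffOn_univ]
  exact hu.comp (f := fun y => (τ, y)) (by fun_prop) fun y _ => ⟨hτ, mem_univ y⟩

theorem contDiffOn_fderiv_slice_apply {m n : ℕ∞ω}
    (hu : ContDiffOn ℝ n (uncurry u) (Ici 0 ×ˢ univ)) (hmn : m + 1 ≤ n) (v : E) :
    ContDiffOn ℝ m (uncurry fun σ y => fderiv ℝ (u σ) y v) (Ici 0 ×ˢ univ) := by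
  intro p hp
  have hu' : ContDiffOn ℝ n (uncurry fun q : ℝ × E => u q.1) ((Ici 0 ×ˢ univ) ×ˢ univ) :=
    hu.comp (f := fun q : (ℝ × E) × E => (q.1.1, q.2)) (by fun_prop)
      fun q hq => ⟨hq.1.1, mem_univ q.2⟩
  have hfderiv := (hu' (p, p.2) ⟨hp, mem_univ _⟩).fderivWithin_apply
    (g := Prod.snd) (k := fun _ => v) contDiffWithinAt_snd contDiffWithinAt_const
    uniqueDiffOn_univ hmn hp (subset_univ _)
  simpa only [fderivWithin_univ, uncurry_def] using hfderiv

theorem contDiffAt_uncurry_of_pos {n : ℕ∞ω}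
    (hu : ContDiffOn ℝ n (uncurry u) (Ici 0 ×ˢ univ)) (hτ : 0 < τ) (x : E) :
    ContDiffAt ℝ n (uncurry u) (τ, x) :=
  hu.contDiffAt (prod_mem_nhds (Ici_mem_nhds hτ) univ_mem)

theorem fderiv_slice_apply (hu : DifferentiableAt ℝ (uncurry u) (τ, x)) (v : E) :
    fderiv ℝ (u τ) x v = fderiv ℝ (uncurry u) (τ, x) (0, v) := by
  have h : HasFDerivAt (u τ) _ x := hu.hasFDerivAt.comp x (hasFDerivAt_prodMk_right τ x)
  simp [h.fderiv]

theorem hasDerivAt_slice (hu : DifferentiableAt ℝ (uncurry u) (τ, x)) :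
    HasDerivAt (fun σ => u σ x) (fderiv ℝ (uncurry u) (τ, x) (1, 0)) τ :=
  hu.hasFDerivAt.comp_hasDerivAt (f := fun σ => (σ, x)) τ
    ((hasDerivAt_id τ).prodMk (hasDerivAt_const τ x))

theorem hasDerivAt_fderiv_slice_apply (hu : ContDiffAt ℝ 2 (uncurry u) (τ, x)) (v : E) :
    HasDerivAt (fun σ => fderiv ℝ (u σ) x v) (fderiv ℝ (fun y => deriv (u · y) τ) x v) τ := by
  have hnear : ∀ᶠ p in 𝓝 (τ, x), DifferentiableAt ℝ (uncurry u) p :=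
    (hu.eventually (by simp)).mono fun _ hp => hp.differentiableAt (by simp)
  have hDu : DifferentiableAt ℝ (fderiv ℝ (uncurry u)) (τ, x) :=
    (hu.fderiv_right (m := 1) (by norm_num)).differentiableAt (by simp)
  have hspace : (fun σ => fderiv ℝ (u σ) x v) =ᶠ[𝓝 τ]
      fun σ => fderiv ℝ (uncurry u) (σ, x) (0, v) :=
    ((Continuous.prodMk_left x).tendsto τ |>.eventually hnear).mono fun _ hσ =>
      fderiv_slice_apply hσ v
  have htime : (fun y => deriv (u · y) τ) =ᶠ[𝓝 x]
      fun y => fderiv ℝ (uncurry u) (τ, y) (1, 0) :=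
    ((Continuous.prodMk_right τ).tendsto x |>.eventually hnear).mono fun _ hy =>
      (hasDerivAt_slice hy).deriv
  have hmixed : HasFDerivAt (fun y => fderiv ℝ (uncurry u) (τ, y) (1, 0)) _ x :=
    (hDu.hasFDerivAt.comp x (hasFDerivAt_prodMk_right τ x)).clm_apply (hasFDerivAt_const _ _)
  have hsymm : IsSymmSndFDerivAt ℝ (uncurry u) (τ, x) := hu.isSymmSndFDerivAt (by simp)
  have htotal : HasDerivAt (fun σ => fderiv ℝ (uncurry u) (σ, x) (0, v)) _ τ :=
    (hDu.hasFDerivAt.comp_hasDerivAt (f := fun σ => (σ, x)) τ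
      ((hasDerivAt_id τ).prodMk (hasDerivAt_const τ x))).clm_apply (hasDerivAt_const τ (0, v))
  rw [hspace.hasDerivAt_iff, htime.fderiv_eq, hmixed.fderiv]
  refine htotal.congr_deriv ?_
  simpa using hsymm (1, 0) (0, v)

theorem hasDerivAt_setIntegral_of_isCompact {X : Type*} [TopologicalSpace X] [MeasurableSpace X]
    [OpensMeasurableSpace X] {μ : Measure X} [IsFiniteMeasureOnCompacts μ] {K : Set X}
    (hK : IsCompact K) (hKm : MeasurableSet K) {s : Set ℝ} (hs : s ∈ 𝓝 τ) {f f' : ℝ → X → ℝ}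
    (hf : ∀ σ ∈ s, ContinuousOn (f σ) K) (hf' : ContinuousOn (uncurry f') (s ×ˢ K))
    (hderiv : ∀ σ ∈ s, ∀ x ∈ K, HasDerivAt (f · x) (f' σ x) σ) :
    HasDerivAt (fun σ => ∫ x in K, f σ x ∂μ) (∫ x in K, f' τ x ∂μ) τ := by
  obtain ⟨c, hc, hcs, hc_compact⟩ := local_compact_nhds hs
  obtain ⟨M, hM⟩ :=
    (hc_compact.prod hK).exists_bound_of_continuousOn (hf'.mono (prod_mono_left hcs))
  have hτ : τ ∈ s := mem_of_mem_nhds hs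
  have hf'τ : ContinuousOn (f' τ) K :=
    hf'.comp (f := fun x => (τ, x)) (by fun_prop) fun x hx => ⟨hτ, hx⟩
  refine (hasDerivAt_integral_of_dominated_loc_of_deriv_le (bound := fun _ => M) hc
    (mem_of_superset hs fun σ hσ => (hf σ hσ).aestronglyMeasurable hKm)
    ((hf τ hτ).integrableOn_compact' hK hKm) (hf'τ.aestronglyMeasurable hKm) ?_ ?_ ?_).2
  · exact ae_restrict_of_forall_mem hKm fun x hx σ hσ => hM (σ, x) ⟨hσ, hx⟩
  · exact integrableOn_const hK.measure_ne_top
  · exact ae_restrict_of_forall_mem hKm fun x hx σ hσ => hderiv σ (hcs hσ) x hx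

end SpaceTime

/-- A solution of `∂_τ u = ν Δu` on `𝕋³`, smooth up to time zero. Time is the first argument, so
that `u τ` is the solution at time `τ`; the equation is required at positive times only, where the
time derivative is two-sided. -/
structure IsPeriodicHeatFlow (ν : ℝ) (u : ℝ → E3 → ℝ) : Prop where
  smooth : ContDiffOn ℝ ∞ (uncurry u) (Ici 0 ×ˢ univ)
  periodic : ∀ τ, SpacePeriodic (u τ)
  heat : ∀ τ, 0 < τ → ∀ x, HasDerivAt (u · x) (ν * lap (u τ) x) τ

theorem IsHeat.isPeriodicHeatFlow {ν : ℝ} {v : E3 → ℝ → ℝ} (hv : IsHeat ν (Ici 0) v)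
    (hsmooth : ContDiffOn ℝ ∞ (uncurry v) (univ ×ˢ Ici 0))
    (hper : ∀ τ, SpacePeriodic fun x => v x τ) :
    IsPeriodicHeatFlow ν fun τ x => v x τ := by
  have hswap : ContDiffOn ℝ ∞ (uncurry fun τ x => v x τ) (Ici 0 ×ˢ univ) :=
    hsmooth.comp (f := fun p : ℝ × E3 => (p.2, p.1)) (by fun_prop) fun _ hp => ⟨hp.2, hp.1⟩
  refine ⟨hswap, hper, fun τ hτ x => ?_⟩
  have hdiff : DifferentiableAt ℝ (uncurry fun σ y => v y σ) (τ, x) :=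
    (contDiffAt_uncurry_of_pos hswap hτ x).differentiableAt (by simp)
  rw [← hv τ hτ.le x, derivWithin_of_mem_nhds (Ici_mem_nhds hτ)]
  exact (hasDerivAt_slice hdiff).differentiableAt.hasDerivAt

namespace IsPeriodicHeatFlow

variable {ν τ : ℝ} {u : ℝ → E3 → ℝ}

theorem contDiff {n : ℕ} (hu : IsPeriodicHeatFlow ν u) (hτ : 0 ≤ τ) : ContDiff ℝ n (u τ) :=
  contDiff_infty.1 (contDiff_slice hu.smooth hτ) n

protected theorem pd (hu : IsPeriodicHeatFlow ν u) (j : Fin 3) :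
    IsPeriodicHeatFlow ν fun τ => pd j (u τ) where
  smooth := contDiffOn_fderiv_slice_apply hu.smooth (by simp) _
  periodic τ := (hu.periodic τ).pd j
  heat τ hτ x := by
    have hlap : ContDiff ℝ 1 (lap (u τ)) := ContDiff.sum fun i _ =>
      contDiff_pd (contDiff_pd (m := 2) (hu.contDiff (n := 3) hτ.le) (by norm_num) i)
        (by norm_num) i
    have htime : (fun y => deriv (u · y) τ) = fun y => ν * lap (u τ) y :=
      funext fun y => (hu.heat τ hτ y).deriv
    have hmixed := hasDerivAt_fderiv_slice_apply
      ((contDiffAt_uncurry_of_pos hu.smooth hτ x).of_le ENat.LEInfty.out) (Pi.single j 1)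
    rw [htime] at hmixed
    rw [lap_pd (hu.contDiff hτ.le)]
    exact hmixed.congr_deriv (congrFun (pd_const_mul ν hlap j) x)

theorem iterate_pd (hu : IsPeriodicHeatFlow ν u) (j : Fin 3) (n : ℕ) :
    IsPeriodicHeatFlow ν fun τ => (pd j)^[n] (u τ) := by
  induction n with
  | zero => exact hu
  | succ n ih => simpa only [Function.iterate_succ_apply'] using ih.pd j

protected theorem pdM (hu : IsPeriodicHeatFlow ν u) (β : Fin 3 → ℕ) :
    IsPeriodicHeatFlow ν fun τ => pdM β (u τ) :=
  ((hu.iterate_pd 2 (β 2)).iterate_pd 1 (β 1)).iterate_pd 0 (β 0)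

theorem continuousOn_L2normSq (hu : IsPeriodicHeatFlow ν u) :
    ContinuousOn (fun τ => L2normSq (u τ)) (Ici 0) := by
  have hcont : Continuous (uncurry fun τ x => u (max τ 0) x ^ 2) :=
    (hu.smooth.continuousOn.comp_continuous (f := fun p : ℝ × E3 => (max p.1 0, p.2))
      (by fun_prop) fun p => ⟨le_max_right p.1 0, mem_univ p.2⟩).pow 2
  refine (continuous_parametric_integral_of_continuous (μ := volume) hcont
    isCompact_T3).continuousOn.congr fun τ hτ => ?_
  simp only [L2normSq, max_eq_left (mem_Ici.1 hτ)]

theorem hasDerivAt_L2normSq (hu : IsPeriodicHeatFlow ν u) (hτ : 0 < τ) :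
    HasDerivAt (fun σ => L2normSq (u σ)) (-(2 * ν) * ∑ j, L2normSq (pd j (u τ))) τ := by
  have hlap : ContinuousOn (uncurry fun σ => lap (u σ)) (Ici 0 ×ˢ univ) :=
    continuousOn_finsetSum Finset.univ (f := fun j (p : ℝ × E3) => pd j (pd j (u p.1)) p.2)
      fun j _ => ((hu.pd j).pd j).smooth.continuousOn
  have hrate : ContinuousOn (uncurry fun σ x => 2 * ν * (u σ x * lap (u σ) x)) (Ioi 0 ×ˢ T3) :=
    (continuousOn_const.mul (hu.smooth.continuousOn.mul hlap)).mono
      (prod_mono Ioi_subset_Ici_self (subset_univ _))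
  have hderiv := hasDerivAt_setIntegral_of_isCompact (μ := volume) isCompact_T3 measurableSet_T3
    (Ioi_mem_nhds hτ) (f := fun σ x => u σ x ^ 2)
    (fun σ hσ => ((hu.contDiff (n := 0) (le_of_lt hσ)).continuous.pow 2).continuousOn)
    hrate (fun σ hσ x _ => ((hu.heat σ hσ x).fun_pow 2).congr_deriv (by ring))
  refine hderiv.congr_deriv ?_
  rw [integral_const_mul, integral_mul_lap (hu.contDiff (n := 1) hτ.le)
    (hu.contDiff (n := 2) hτ.le) (hu.periodic τ) (hu.periodic τ)]
  simp only [L2normSq, sq]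
  ring

theorem antitoneOn_L2normSq (hν : 0 ≤ ν) (hu : IsPeriodicHeatFlow ν u) :
    AntitoneOn (fun τ => L2normSq (u τ)) (Ici 0) := by
  refine antitoneOn_of_deriv_nonpos (convex_Ici 0) hu.continuousOn_L2normSq ?_ ?_ <;>
    rw [interior_Ici] <;> intro τ hτ
  · exact (hu.hasDerivAt_L2normSq hτ).differentiableAt.differentiableWithinAt
  · rw [(hu.hasDerivAt_L2normSq hτ).deriv, neg_mul]
    have hdissipation : 0 ≤ ∑ j, L2normSq (pd j (u τ)) :=
      Finset.sum_nonneg fun j _ => L2normSq_nonneg _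
    exact neg_nonpos.2 (by positivity)

-- The dissipation `2ν ‖∂ⱼu‖²` is nonincreasing, yet its integral over `[τ, τ + h]` is at most the
-- energy available at time `τ`.
theorem L2normSq_pd_le (hν : 0 < ν) (hu : IsPeriodicHeatFlow ν u) (j : Fin 3) {h : ℝ}
    (hτ : 0 ≤ τ) (hh : 0 < h) :
    L2normSq (pd j (u (τ + h))) ≤ (2 * ν * h)⁻¹ * L2normSq (u τ) := by
  have hdecay : ∀ σ ∈ Ioo τ (τ + h), deriv (fun σ => L2normSq (u σ)) σ ≤
      -(2 * ν) * L2normSq (pd j (u (τ + h))) := by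
    intro σ hσ
    have hσ₀ : 0 < σ := hτ.trans_lt hσ.1
    rw [(hu.hasDerivAt_L2normSq hσ₀).deriv]
    refine mul_le_mul_of_nonpos_left ?_ (by linarith)
    calc L2normSq (pd j (u (τ + h))) ≤ L2normSq (pd j (u σ)) :=
          (hu.pd j).antitoneOn_L2normSq hν.le hσ₀.le (hσ₀.le.trans hσ.2.le) hσ.2.le
      _ ≤ ∑ i, L2normSq (pd i (u σ)) :=
          Finset.single_le_sum (f := fun i => L2normSq (pd i (u σ)))
            (fun i _ => L2normSq_nonneg _) (Finset.mem_univ j)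
  have hdiff : DifferentiableOn ℝ (fun σ => L2normSq (u σ)) (interior (Icc τ (τ + h))) := by
    rw [interior_Icc]
    exact fun σ hσ => (hu.hasDerivAt_L2normSq (hτ.trans_lt hσ.1)).differentiableAt
      |>.differentiableWithinAt
  have hmean := (convex_Icc τ (τ + h)).image_sub_le_mul_sub_of_deriv_le
    (hu.continuousOn_L2normSq.mono fun σ hσ => hτ.trans hσ.1)
    hdiff (by rwa [interior_Icc]) τ (left_mem_Icc.2 (by linarith)) (τ + h)
    (right_mem_Icc.2 (by linarith)) (by linarith)
  have hnonneg := L2normSq_nonneg (u (τ + h))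
  rw [inv_mul_eq_div, le_div_iff₀ (by positivity)]
  linarith

theorem L2normSq_iterate_pd_le (hν : 0 < ν) (hu : IsPeriodicHeatFlow ν u) (j : Fin 3) (n : ℕ)
    {h : ℝ} (hτ : 0 ≤ τ) (hh : 0 < h) :
    L2normSq ((pd j)^[n] (u (τ + n * h))) ≤ (2 * ν * h)⁻¹ ^ n * L2normSq (u τ) := by
  induction n with
  | zero => simp
  | succ n ih =>
    have hstep := (hu.iterate_pd j n).L2normSq_pd_le hν j (τ := τ + n * h) (by positivity) hh
    rw [Function.iterate_succ_apply', pow_succ', mul_assoc, Nat.cast_succ, add_one_mul, ← add_assoc]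
    exact hstep.trans (by gcongr)

theorem L2normSq_pdM_le (hν : 0 < ν) (hu : IsPeriodicHeatFlow ν u) (β : Fin 3 → ℕ) {h : ℝ}
    (hh : 0 < h) (hτ : (∑ i, β i : ℕ) * h ≤ τ) :
    L2normSq (pdM β (u τ)) ≤ (2 * ν * h)⁻¹ ^ (∑ i, β i) * L2normSq (u 0) := by
  rw [Fin.sum_univ_three] at hτ ⊢
  push_cast at hτ
  have hu₂ := hu.iterate_pd 2 (β 2)
  have hu₁ := hu₂.iterate_pd 1 (β 1)
  set c := (2 * ν * h)⁻¹
  calc L2normSq (pdM β (u τ))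
      ≤ L2normSq (pdM β (u (0 + β 2 * h + β 1 * h + β 0 * h))) :=
        (hu.pdM β).antitoneOn_L2normSq hν.le (mem_Ici.2 (by positivity))
          (mem_Ici.2 (le_trans (by positivity) hτ)) (by linarith)
    _ ≤ c ^ β 0 * L2normSq ((pd 1)^[β 1] ((pd 2)^[β 2]
          (u (0 + β 2 * h + β 1 * h)))) :=
        hu₁.L2normSq_iterate_pd_le hν 0 (β 0) (by positivity) hh
    _ ≤ c ^ β 0 * (c ^ β 1 * L2normSq ((pd 2)^[β 2] (u (0 + β 2 * h)))) := by
        gcongr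
        exact hu₂.L2normSq_iterate_pd_le hν 1 (β 1) (by positivity) hh
    _ ≤ c ^ β 0 * (c ^ β 1 * (c ^ β 2 * L2normSq (u 0))) := by
        gcongr
        exact hu.L2normSq_iterate_pd_le hν 2 (β 2) le_rfl hh
    _ = c ^ (β 0 + β 1 + β 2) * L2normSq (u 0) := by ring

protected theorem Hnorm1_eq_sqrt (hu : IsPeriodicHeatFlow ν u) (m : ℕ) (hτ : 0 ≤ τ) :
    Hnorm1 m (u τ) =
      √(∑ k ∈ Finset.range (m + 1), ∑ β ∈ midx k, L2normSq (pdM β (u τ))) :=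
  Hnorm1_eq_sqrt fun β => ((hu.pdM β).contDiff (n := 0) hτ).continuous

theorem Hnorm1_le (hν : 0 ≤ ν) (hu : IsPeriodicHeatFlow ν u) (m : ℕ) (hτ : 0 ≤ τ) :
    Hnorm1 m (u τ) ≤ Hnorm1 m (u 0) := by
  rw [hu.Hnorm1_eq_sqrt m hτ, hu.Hnorm1_eq_sqrt m le_rfl]
  gcongr with k _ β _
  exact (hu.pdM β).antitoneOn_L2normSq hν self_mem_Ici hτ hτ

end IsPeriodicHeatFlow

theorem exists_Hnorm1_le_mul_L2norm1 {ν δ : ℝ} (hν : 0 < ν) (hδ : 0 < δ) (m : ℕ) :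
    ∃ K, 0 ≤ K ∧ ∀ u, IsPeriodicHeatFlow ν u → ∀ τ, δ ≤ τ →
      Hnorm1 m (u τ) ≤ K * L2norm1 (u 0) := by
  have hh : 0 < δ / (m + 1) := by positivity
  refine ⟨√(∑ k ∈ Finset.range (m + 1), ∑ _β ∈ midx k, (2 * ν * (δ / (m + 1)))⁻¹ ^ k),
    Real.sqrt_nonneg _, fun u hu τ hτ => ?_⟩
  rw [hu.Hnorm1_eq_sqrt m (hδ.le.trans hτ), L2norm1_eq_sqrt,
    ← Real.sqrt_mul' _ (L2normSq_nonneg _)]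
  simp only [Finset.sum_mul]
  gcongr with k hk β hβ
  obtain rfl : ∑ i, β i = k := Finset.Nat.mem_antidiagonalTuple.1 hβ
  refine hu.L2normSq_pdM_le hν β hh ?_
  have hk' : ((∑ i, β i : ℕ) : ℝ) ≤ m + 1 := by exact_mod_cast (Finset.mem_range.1 hk).le
  calc ((∑ i, β i : ℕ) : ℝ) * (δ / (m + 1)) ≤ (m + 1) * (δ / (m + 1)) := by gcongr
    _ = δ := by field_simp
    _ ≤ τ := hτ

theorem intervalIntegral_le_of_le_exp {f : ℝ → ℝ} {a b t P R : ℝ} (ha : 0 < a) (hb : 0 ≤ b)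
    (ht : 0 ≤ t) (hP : 0 ≤ P) (hR : 0 ≤ R) (hf : ∀ s, 0 ≤ f s)
    (hfP : ∀ s ∈ Icc 0 b, f s ≤ P * Real.exp (-a * s))
    (hfR : ∀ s ∈ Icc b t, f s ≤ R * Real.exp (-a * s)) :
    ∫ s in (0 : ℝ)..t, f s ≤ P / a + R * Real.exp (-a * b) / a := by
  set g : ℝ → ℝ := fun s =>
    P * Real.exp (-a * s) + (Ioi b).indicator (fun s => R * Real.exp (-a * s)) s with hg
  have hexp (c : ℝ) : IntegrableOn (fun s => Real.exp (-a * s)) (Ioi c) :=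
    integrableOn_exp_mul_Ioi (neg_lt_zero.2 ha) c
  have hindicator : IntegrableOn ((Ioi b).indicator fun s => R * Real.exp (-a * s)) (Ioi 0) :=
    (IntegrableOn.integrable_indicator ((hexp b).const_mul R) measurableSet_Ioi).integrableOn
  have hg_int : IntegrableOn g (Ioi 0) := ((hexp 0).const_mul P).add hindicator
  have hg_nonneg (s : ℝ) : 0 ≤ g s :=
    add_nonneg (by positivity) (indicator_nonneg (fun _ _ => by positivity) s)
  have hfg : ∀ s ∈ Ioc 0 t, f s ≤ g s := by
    intro s hs
    rcases le_or_gt s b with hsb | hbs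
    · simpa [hg, hsb.not_gt] using hfP s ⟨hs.1.le, hsb⟩
    · simp only [hg, indicator_of_mem (mem_Ioi.2 hbs)]
      exact (hfR s ⟨hbs.le, hs.2⟩).trans (le_add_of_nonneg_left (by positivity))
  calc ∫ s in (0 : ℝ)..t, f s = ∫ s in Ioc 0 t, f s := intervalIntegral.integral_of_le ht
    _ ≤ ∫ s in Ioc 0 t, g s :=
        integral_mono_of_nonneg (.of_forall hf) (hg_int.mono_set Ioc_subset_Ioi_self)
          (ae_restrict_of_forall_mem measurableSet_Ioc hfg)
    _ ≤ ∫ s in Ioi 0, g s :=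
        setIntegral_mono_set hg_int (.of_forall hg_nonneg) Ioc_subset_Ioi_self.eventuallyLE
    _ = P / a + R * Real.exp (-a * b) / a := by
        rw [integral_add ((hexp 0).const_mul P) hindicator,
          setIntegral_indicator measurableSet_Ioi, Ioi_inter_Ioi, sup_eq_right.2 hb,
          integral_const_mul, integral_const_mul, integral_exp_mul_Ioi (neg_lt_zero.2 ha),
          integral_exp_mul_Ioi (neg_lt_zero.2 ha)]
        simp only [mul_zero, exp_zero, neg_div_neg_eq, one_div, neg_mul]
        ring

end HeatFlow

theorem heat_duhamel_estimate_general (m : ℕ) (ν T : ℝ) (hν : 0 < ν) (hT : 0 < T) :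
    ∃ C : ℝ, 0 < C ∧
      ∀ (N A B : ℝ), 1 ≤ N → 0 ≤ A → 0 ≤ B →
      ∀ (F : ℝ → E3 → ℝ) (V : ℝ → E3 → ℝ → ℝ),
        Continuous (fun p : ℝ × E3 => F p.1 p.2) →
        (∀ s : ℝ, 0 ≤ s →
          (L2norm1 (F s) ≤ A * Real.exp (-ν * N ^ 2 * s) ∧
           Hnorm1 m (F s) ≤ B * Real.exp (-ν * N ^ 2 * s) ∧
           ContDiffOn ℝ (⊤ : ℕ∞) (fun p : E3 × ℝ => V s p.1 p.2) (Set.univ ×ˢ Set.Ici 0) ∧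
           (∀ τ, SpacePeriodic (fun x => V s x τ)) ∧
           IsHeat ν (Set.Ici 0) (V s) ∧
           (∀ x, V s x 0 = F s x))) →
        ∀ t : ℝ, T ≤ t →
          (∫ s in (0:ℝ)..t, Hnorm1 m (fun x => V s x (t - s))) ≤
            C * (A * N ^ (-2 : ℤ) + B * Real.exp (-ν * N ^ 2 * t / 2)) := by
  obtain ⟨K, hK, hsmoothing⟩ := exists_Hnorm1_le_mul_L2norm1 hν (half_pos hT) m
  refine ⟨(K + 1) / ν, by positivity, fun N A B hN hA hB F V _ hFV t ht => ?_⟩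
  have ht₀ : 0 ≤ t := hT.le.trans ht
  have hflow (s : ℝ) (hs : 0 ≤ s) : IsPeriodicHeatFlow ν fun τ x => V s x τ :=
    let ⟨_, _, hsmooth, hper, hheat, _⟩ := hFV s hs
    hheat.isPeriodicHeatFlow hsmooth hper
  have hinit (s : ℝ) (hs : 0 ≤ s) : (fun x => V s x 0) = F s := funext (hFV s hs).2.2.2.2.2
  have hearly : ∀ s ∈ Icc 0 (t / 2), Hnorm1 m (fun x => V s x (t - s)) ≤
      K * A * Real.exp (-(ν * N ^ 2) * s) := fun s hs =>
    calc Hnorm1 m (fun x => V s x (t - s)) ≤ K * L2norm1 (F s) :=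
          hinit s hs.1 ▸ hsmoothing _ (hflow s hs.1) (t - s) (by linarith [hs.2])
      _ ≤ K * (A * Real.exp (-ν * N ^ 2 * s)) := by gcongr; exact (hFV s hs.1).1
      _ = K * A * Real.exp (-(ν * N ^ 2) * s) := by ring_nf
  have hlate : ∀ s ∈ Icc (t / 2) t, Hnorm1 m (fun x => V s x (t - s)) ≤
      B * Real.exp (-(ν * N ^ 2) * s) := fun s hs =>
    have hs₀ : 0 ≤ s := by linarith [hs.1]
    calc Hnorm1 m (fun x => V s x (t - s)) ≤ Hnorm1 m (F s) :=
          hinit s hs₀ ▸ (hflow s hs₀).Hnorm1_le hν.le m (sub_nonneg.2 hs.2)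
      _ ≤ B * Real.exp (-(ν * N ^ 2) * s) := by rw [← neg_mul]; exact (hFV s hs₀).2.1
  have hN₂ : (N ^ 2)⁻¹ ≤ 1 := inv_le_one_of_one_le₀ (one_le_pow₀ hN)
  calc ∫ s in (0:ℝ)..t, Hnorm1 m (fun x => V s x (t - s))
      ≤ K * A / (ν * N ^ 2) + B * Real.exp (-(ν * N ^ 2) * (t / 2)) / (ν * N ^ 2) :=
        intervalIntegral_le_of_le_exp (by positivity) (by positivity) ht₀ (by positivity) hB
          (fun _ => Hnorm1_nonneg _ _) hearly hlate
    _ = K / ν * (A * (N ^ 2)⁻¹) + 1 / ν * (B * Real.exp (-ν * N ^ 2 * t / 2) * (N ^ 2)⁻¹) := by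
        ring_nf
    _ ≤ (K + 1) / ν * (A * (N ^ 2)⁻¹) + (K + 1) / ν * (B * Real.exp (-ν * N ^ 2 * t / 2) * 1) := by
        gcongr <;> linarith
    _ = (K + 1) / ν * (A * N ^ (-2 : ℤ) + B * Real.exp (-ν * N ^ 2 * t / 2)) := by
        rw [zpow_neg, zpow_ofNat]; ring

/-- Duhamel-type heat kernel estimate: `V s` denotes the heat evolution
`τ ↦ e^{ντΔ} F(s)` of the zero-mean family `F`: the constant `C` depends only on
`r`, `ν`, `T`. -/
theorem heat_duhamel_estimate (r : ℕ) (hr : 1 ≤ r) (ν T : ℝ) (hν : 0 < ν) (hT : 0 < T) :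
    ∃ C : ℝ, 0 < C ∧
      ∀ (N A B : ℝ), 1 ≤ N → 0 ≤ A → 0 ≤ B →
      ∀ (F : ℝ → E3 → ℝ) (V : ℝ → E3 → ℝ → ℝ),
        Continuous (fun p : ℝ × E3 => F p.1 p.2) →
        (∀ s : ℝ, 0 ≤ s →
          ((∫ x in T3, F s x) = 0 ∧
           L2norm1 (F s) ≤ A * Real.exp (-ν * N ^ 2 * s) ∧
           Hnorm1 (r + 1) (F s) ≤ B * Real.exp (-ν * N ^ 2 * s) ∧
           ContDiffOn ℝ (⊤ : ℕ∞) (fun p : E3 × ℝ => V s p.1 p.2) (Set.univ ×ˢ Set.Ici 0) ∧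
           (∀ τ, SpacePeriodic (fun x => V s x τ)) ∧
           IsHeat ν (Set.Ici 0) (V s) ∧
           (∀ x, V s x 0 = F s x))) →
        ∀ t : ℝ, T ≤ t →
          (∫ s in (0:ℝ)..t, Hnorm1 (r + 1) (fun x => V s x (t - s))) ≤
            C * (A * N ^ (-2 : ℤ) + B * Real.exp (-ν * N ^ 2 * t / 2)) :=
  let ⟨C, hC, hestimate⟩ := heat_duhamel_estimate_general (r + 1) ν T hν hT
  ⟨C, hC, fun N A B hN hA hB F V hF hFV =>
    hestimate N A B hN hA hB F V hF fun s hs => (hFV s hs).2⟩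
end
end

section
/- Let W be a smooth vector field on 𝕋³ that is not identically zero and satisfies curl W = λW for some real number λ ≠ 0. Then there exists a nonzero integer vector k ∈ ℤ³ such that λ² = k₁² + k₂² + k₃²; in other words, every nonzero eigenvalue λ of the curl operator on 𝕋³ is of the form λ = ±|k| with k ∈ ℤ³. -/
open MeasureTheory Real Set

noncomputable section

/-!
Put `W` into Fourier series. Since `e · curl W = div (W × e)` for every constant vector `e`, and
Fourier coefficients turn `div` into the dot product with `ik` by the divergence theorem on a period
box, `curl` acts on the coefficient `w` at `k` as `w ↦ ik × w`. Only `curl W = λ W` itself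
is integrated here, never a single partial derivative. A nonzero `W` has some coefficient `w ≠ 0`,
and `ik × w = λ w` makes `w` orthogonal to `k`; taking the cross product once more,
`λ² w = ik × (ik × w) = |k|² w`.
-/

section CrossProduct

open scoped Matrix

theorem sq_eq_neg_dotProduct_self_of_cross_eq_smul {R : Type*} [CommRing R] [IsDomain R]
    {k w : Fin 3 → R} {l : R} (hl : l ≠ 0) (hw : w ≠ 0) (h : k ⨯₃ w = l • w) :
    l ^ 2 = -(k ⬝ᵥ k) := by
  have hkw : k ⬝ᵥ w = 0 := by
    have : l * (k ⬝ᵥ w) = 0 := by rw [← smul_eq_mul, ← dotProduct_smul, ← h, dot_self_cross]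
    exact (mul_eq_zero.mp this).resolve_left hl
  have hsmul : l ^ 2 • w = -(k ⬝ᵥ k) • w :=
    calc l ^ 2 • w = k ⨯₃ (k ⨯₃ w) := by rw [h, map_smul, h, smul_smul, sq]
      _ = -(k ⬝ᵥ k) • w := by
        rw [← cross_anticomm, cross_cross_eq_smul_sub_smul, dotProduct_comm w k, hkw]
        simp
  exact smul_left_injective R hw hsmul

theorem ofReal_cross (v w : Fin 3 → ℝ) :
    (fun i => ((v ⨯₃ w) i : ℂ)) = (fun i => (v i : ℂ)) ⨯₃ fun i => (w i : ℂ) := by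
  ext i
  fin_cases i <;> simp [cross_apply]

theorem differentiable_cross_const {V : Type*} [NormedAddCommGroup V] [NormedSpace ℝ V]
    {u : V → Fin 3 → ℝ} (hu : Differentiable ℝ u) (e : Fin 3 → ℝ) :
    Differentiable ℝ fun x => u x ⨯₃ e :=
  (LinearMap.toContinuousLinearMap (crossProduct.flip e)).differentiable.comp hu

theorem vdiv_cross_const {u : E3 → E3} {x : E3} (hu : DifferentiableAt ℝ u x) (e : E3) :
    vdiv (fun y => u y ⨯₃ e) x = e ⬝ᵥ vcurl u x := by
  have hu' : ∀ i, DifferentiableAt ℝ (fun y => u y i) x := differentiableAt_pi.mp hu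
  have hpd : ∀ i a b : Fin 3, pd i (fun y => u y a * e b - u y b * e a) x =
      pd i (fun y => u y a) x * e b - pd i (fun y => u y b) x * e a := by
    intro i a b
    simp only [pd]
    rw [fderiv_fun_sub ((hu' a).mul_const _) ((hu' b).mul_const _), fderiv_mul_const (hu' a),
      fderiv_mul_const (hu' b)]
    simp [mul_comm]
  simp only [vdiv, Fin.sum_univ_three, cross_apply, Matrix.cons_val, hpd, vcurl,
    Matrix.vec3_dotProduct]
  ring

end CrossProduct

section Periodic

variable {ι : Type*} [Finite ι] [DecidableEq ι]

theorem periodic_zsmul_of_periodic_single {G X : Type*} [AddCommGroup G] {f : (ι → G) → X}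
    {c : ι → G} (hf : ∀ i, Function.Periodic f (Pi.single i (c i))) (m : ι → ℤ) :
    Function.Periodic f (fun i => m i • c i) := by
  cases nonempty_fintype ι
  rw [← Finset.univ_sum_single fun i => m i • c i]
  refine Finset.sum_induction _ (Function.Periodic f) (fun _ _ => Function.Periodic.add_period)
    (by simp [Function.Periodic]) fun i _ => ?_
  rw [Pi.single_zsmul]
  exact (hf i).zsmul (m i)

theorem exists_continuousMap_unitAddTorus_of_periodic {X : Type*} [TopologicalSpace X]
    {f : (ι → ℝ) → X} (hf : Continuous f) (hper : ∀ i, Function.Periodic f (Pi.single i 1)) :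
    ∃ g : C(UnitAddTorus ι, X), ∀ x : ι → ℝ, g (fun i => (x i : UnitAddCircle)) = f x := by
  let q : C(ι → ℝ, UnitAddTorus ι) := ⟨fun x i => (x i : UnitAddCircle), by fun_prop⟩
  have hq : Topology.IsQuotientMap q :=
    (IsOpenQuotientMap.piMap (f := fun (_ : ι) (t : ℝ) => (t : UnitAddCircle))
      fun _ => QuotientAddGroup.isOpenQuotientMap_mk).isQuotientMap
  have hfac : Function.FactorsThrough (⟨f, hf⟩ : C(ι → ℝ, X)) q := by
    intro x y hxy
    have hdiff : ∀ i, ∃ m : ℤ, m • (1 : ℝ) = x i - y i := fun i =>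
      (AddCircle.coe_eq_zero_iff 1).mp <| by
        rw [AddCircle.coe_sub, sub_eq_zero]
        exact congrFun hxy i
    choose m hm using hdiff
    have hx : x = y + fun i => m i • (1 : ℝ) := by
      ext i
      simp [hm]
    rw [hx]
    exact periodic_zsmul_of_periodic_single hper m y
  exact ⟨hq.lift ⟨f, hf⟩ hfac, fun x => DFunLike.congr_fun (hq.lift_comp ⟨f, hf⟩ hfac) x⟩

end Periodic

theorem integral_divergence_eq_zero_of_periodic {E : Type*} [NormedAddCommGroup E]
    [NormedSpace ℝ E] {n : ℕ} {a b : Fin (n + 1) → ℝ} (hab : a ≤ b)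
    {V : Fin (n + 1) → (Fin (n + 1) → ℝ) → E} (hV : ∀ i, Differentiable ℝ (V i))
    (hper : ∀ i, Function.Periodic (V i) (Pi.single i (b i - a i)))
    (hdiv : IntegrableOn (fun x => ∑ i, fderiv ℝ (V i) x (Pi.single i 1)) (Icc a b)) :
    ∫ x in Icc a b, ∑ i, fderiv ℝ (V i) x (Pi.single i 1) = 0 := by
  rw [integral_divergence_of_hasFDerivAt_off_countable' a b hab V (fun i => fderiv ℝ (V i)) ∅
    countable_empty (fun i => (hV i).continuous.continuousOn)
    (fun x _ i => (hV i x).hasFDerivAt) hdiv]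
  refine Finset.sum_eq_zero fun i _ => sub_eq_zero.mpr (integral_congr_ae (.of_forall fun x => ?_))
  have hface : i.insertNth (b i) x =
      i.insertNth (a i) x + (Pi.single i (b i - a i) : Fin (n + 1) → ℝ) := by
    rw [← sub_eq_iff_eq_add', Fin.insertNth_sub_same (α := fun _ => ℝ)]
  simp only [hface]
  exact hper i _

section FourierCoefficients

open Complex
open scoped Pointwise

section Character

variable {ι : Type*} [Fintype ι]

/-- The character `x ↦ exp (i k · x)` of the torus `(ℝ/2πℤ)^ι`, as a function on `ℝ^ι`. -/
def torusChar (k : ι → ℤ) (x : ι → ℝ) : ℂ := cexp (I * ∑ i, (k i : ℂ) * x i)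

theorem differentiable_torusChar (k : ι → ℤ) : Differentiable ℝ (torusChar k) := by
  unfold torusChar
  fun_prop

theorem torusChar_add (k : ι → ℤ) (x y : ι → ℝ) :
    torusChar k (x + y) = torusChar k x * torusChar k y := by
  simp only [torusChar, ← Complex.exp_add, Pi.add_apply, ofReal_add, mul_add,
    Finset.sum_add_distrib]

theorem torusChar_single [DecidableEq ι] (k : ι → ℤ) (j : ι) (t : ℝ) :
    torusChar k (Pi.single j t) = cexp (I * (k j * t)) := by
  rw [torusChar, Finset.sum_eq_single j (fun i _ hi => by simp [hi]) (by simp), Pi.single_eq_same]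

theorem periodic_torusChar [DecidableEq ι] (k : ι → ℤ) (j : ι) :
    Function.Periodic (torusChar k) (Pi.single j (2 * π)) := by
  intro x
  have hone : cexp (I * (k j * (2 * π : ℝ))) = 1 :=
    Complex.exp_eq_one_iff.mpr ⟨k j, by push_cast; ring⟩
  rw [torusChar_add, torusChar_single, hone, mul_one]

theorem fderiv_torusChar_single [DecidableEq ι] (k : ι → ℤ) (x : ι → ℝ) (j : ι) :
    fderiv ℝ (torusChar k) x (Pi.single j 1) = I * k j * torusChar k x := by
  have hline : HasDerivAt (fun t : ℝ => torusChar k (x + t • Pi.single j 1))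
      (I * k j * torusChar k x) 0 := by
    have hexp : HasDerivAt (fun t : ℝ => cexp (I * (k j * t))) (I * k j) 0 := by
      simpa using (((ofRealCLM.hasDerivAt (x := (0 : ℝ))).const_mul (k j : ℂ)).const_mul I).cexp
    simpa [torusChar_add, ← Pi.single_smul, torusChar_single, mul_comm] using
      hexp.const_mul (torusChar k x)
  rw [← (differentiable_torusChar k x).lineDeriv_eq_fderiv]
  exact hline.deriv

theorem mFourier_coe_eq_torusChar (k : ι → ℤ) (x : ι → ℝ) :
    UnitAddTorus.mFourier k (fun i => (x i : UnitAddCircle)) = torusChar k ((2 * π) • x) := by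
  simp only [UnitAddTorus.mFourier, ContinuousMap.coe_mk, fourier_coe_apply, torusChar,
    ← Complex.exp_sum, Finset.mul_sum]
  refine congrArg cexp (Finset.sum_congr rfl fun i _ => ?_)
  simp only [Pi.smul_apply, smul_eq_mul]
  push_cast
  ring

end Character

section Coefficient

variable {ι E F : Type*} [Fintype ι] [NormedAddCommGroup E] [NormedSpace ℂ E]
  [NormedAddCommGroup F] [NormedSpace ℂ F]

/-- The unnormalised `k`-th Fourier coefficient of a function on `ℝ^ι` that is `2π`-periodic in
each variable: the usual coefficient is `(2π)^{-|ι|}` times this one. -/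
def torusFourierCoeff (f : (ι → ℝ) → E) (k : ι → ℤ) : E :=
  ∫ x in Icc 0 (fun _ => 2 * π), torusChar (-k) x • f x

theorem integrableOn_torusChar_smul {f : (ι → ℝ) → E} {s : Set (ι → ℝ)} (hs : IsCompact s)
    (hf : IntegrableOn f s) (k : ι → ℤ) : IntegrableOn (fun x => torusChar k x • f x) s :=
  hf.continuousOn_smul (differentiable_torusChar k).continuous.continuousOn hs

theorem torusFourierCoeff_clm_comp [CompleteSpace E] [CompleteSpace F] (L : E →L[ℂ] F)
    {f : (ι → ℝ) → E} (hf : IntegrableOn f (Icc 0 fun _ => 2 * π)) (k : ι → ℤ) :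
    torusFourierCoeff (fun x => L (f x)) k = L (torusFourierCoeff f k) := by
  simp only [torusFourierCoeff, ← L.map_smul]
  exact L.integral_comp_comm (integrableOn_torusChar_smul isCompact_Icc hf _)

theorem torusFourierCoeff_const_smul (c : ℂ) (f : (ι → ℝ) → E) (k : ι → ℤ) :
    torusFourierCoeff (fun x => c • f x) k = c • torusFourierCoeff f k := by
  simp only [torusFourierCoeff, smul_comm _ c, integral_smul]

theorem mFourierCoeff_eq_smul_torusFourierCoeff {f : (ι → ℝ) → E} {g : UnitAddTorus ι → E}
    (hg : ∀ x : ι → ℝ, g (fun i => (x i : UnitAddCircle)) = f ((2 * π) • x)) (k : ι → ℤ) :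
    UnitAddTorus.mFourierCoeff g k =
      ((2 * π) ^ Fintype.card ι)⁻¹ • torusFourierCoeff f k := by
  have hcube : {x : ι → ℝ | ∀ i, x i ∈ Ioc ((0 : ι → ℝ) i) ((0 : ι → ℝ) i + 1)} =
      Set.univ.pi fun i => Ioc ((0 : ι → ℝ) i) ((1 : ι → ℝ) i) := by
    ext x
    simp
  have hdilate : (2 * π) • Icc (0 : ι → ℝ) 1 = Icc 0 (fun _ => 2 * π) :=
    calc (2 * π) • Icc (0 : ι → ℝ) 1
        = Icc ((2 * π) • (0 : ι → ℝ)) ((2 * π) • 1) :=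
          (OrderIso.smulRight Real.two_pi_pos).image_Icc 0 1
      _ = Icc 0 fun _ => 2 * π := by simp [Pi.smul_def]
  rw [UnitAddTorus.mFourierCoeff_eq_integral _ _ 0, hcube, volume_pi,
    setIntegral_congr_set Measure.univ_pi_Ioc_ae_eq_Icc, ← volume_pi]
  simp only [mFourier_coe_eq_torusChar, hg]
  rw [Measure.setIntegral_comp_smul_of_pos volume (fun y => torusChar (-k) y • f y) _
    Real.two_pi_pos, hdilate, Module.finrank_fintype_fun_eq_card, torusFourierCoeff]

theorem exists_torusFourierCoeff_ne_zero [CompleteSpace E] [DecidableEq ι] {f : (ι → ℝ) → E}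
    (hf : Continuous f) (hper : ∀ i, Function.Periodic f (Pi.single i (2 * π)))
    (hne : ∃ x, f x ≠ 0) : ∃ k, torusFourierCoeff f k ≠ 0 := by
  obtain ⟨x, hx⟩ := hne
  obtain ⟨L, hL⟩ := SeparatingDual.exists_ne_zero (R := ℂ) hx
  by_contra! hzero
  obtain ⟨g, hg⟩ := exists_continuousMap_unitAddTorus_of_periodic
    (f := fun y : ι → ℝ => L (f ((2 * π) • y))) (by fun_prop) fun i y => by
      simp only [smul_add, ← Pi.single_smul, smul_eq_mul, mul_one, hper i _]
  have hcoeff : UnitAddTorus.mFourierCoeff g = 0 := by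
    ext k
    rw [mFourierCoeff_eq_smul_torusFourierCoeff (f := fun y => L (f y)) hg,
      torusFourierCoeff_clm_comp L hf.integrableOn_Icc, hzero, map_zero, smul_zero, Pi.zero_apply]
  have hsum := UnitAddTorus.hasSum_mFourier_series_apply_of_summable
    (by rw [hcoeff]; exact summable_zero) fun i => (((2 * π)⁻¹ • x) i : UnitAddCircle)
  simp only [hcoeff, Pi.zero_apply, zero_smul, hg, smul_inv_smul₀ Real.two_pi_pos.ne'] at hsum
  exact hL (hsum.unique hasSum_zero)

theorem torusFourierCoeff_divergence {n : ℕ} {V : Fin (n + 1) → (Fin (n + 1) → ℝ) → E}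
    (hV : ∀ i, Differentiable ℝ (V i))
    (hper : ∀ i, Function.Periodic (V i) (Pi.single i (2 * π)))
    (hdiv : IntegrableOn (fun x => ∑ i, fderiv ℝ (V i) x (Pi.single i 1))
      (Icc 0 fun _ => 2 * π)) (k : Fin (n + 1) → ℤ) :
    torusFourierCoeff (fun x => ∑ i, fderiv ℝ (V i) x (Pi.single i 1)) k =
      ∑ i, (I * k i) • torusFourierCoeff (V i) k := by
  have hχ := differentiable_torusChar (-k)
  have hleibniz : ∀ x, ∑ i, fderiv ℝ (fun y => torusChar (-k) y • V i y) x (Pi.single i 1) =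
      torusChar (-k) x • ∑ i, fderiv ℝ (V i) x (Pi.single i 1) -
        ∑ i, (I * k i) • torusChar (-k) x • V i x := by
    intro x
    rw [Finset.smul_sum, ← Finset.sum_sub_distrib]
    refine Finset.sum_congr rfl fun i _ => ?_
    rw [fderiv_fun_smul (hχ x) (hV i x)]
    simp [fderiv_torusChar_single, smul_smul, sub_eq_add_neg]
  have hdivχ := integrableOn_torusChar_smul isCompact_Icc hdiv (-k)
  have hterm : ∀ i, IntegrableOn (fun x => (I * k i) • torusChar (-k) x • V i x)
      (Icc 0 fun _ => 2 * π) := fun i =>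
    (integrableOn_torusChar_smul isCompact_Icc (hV i).continuous.integrableOn_Icc _).smul _
  have hzero := integral_divergence_eq_zero_of_periodic (a := 0) (b := fun _ => 2 * π)
    (fun _ => Real.two_pi_pos.le) (fun i => hχ.smul (hV i))
    (fun i x => by simp [periodic_torusChar (-k) i x, hper i x])
    (by
      simp only [Pi.smul_def', hleibniz]
      exact hdivχ.sub (integrable_finsetSum _ fun i _ => hterm i))
  simp only [Pi.smul_def', hleibniz] at hzero
  rw [integral_sub hdivχ (integrable_finsetSum _ fun i _ => hterm i), sub_eq_zero,
    integral_finsetSum _ fun i _ => hterm i] at hzero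
  simpa only [integral_smul, torusFourierCoeff] using hzero

end Coefficient

section VectorField

open scoped Matrix

/-- The vector of (unnormalised) Fourier coefficients of the components of a real vector field. -/
def fieldFourierCoeff (u : E3 → E3) (k : Fin 3 → ℤ) : Fin 3 → ℂ :=
  torusFourierCoeff (fun x i => (u x i : ℂ)) k

variable {u : E3 → E3}

theorem SpacePeriodic.periodic_single {X : Type*} {f : E3 → X} (hf : SpacePeriodic f)
    (j : Fin 3) : Function.Periodic f (Pi.single j (2 * π)) := fun x => by
  simpa [← Pi.single_smul] using hf x j

theorem integrableOn_ofReal_field {s : Set E3} (hu : IntegrableOn u s) :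
    IntegrableOn (fun x i => (u x i : ℂ)) s :=
  (ContinuousLinearMap.pi fun i =>
    ofRealCLM ∘L ContinuousLinearMap.proj (R := ℝ) (φ := fun _ : Fin 3 => ℝ) i).integrable_comp hu

theorem fieldFourierCoeff_apply (hu : IntegrableOn u T3) (k : Fin 3 → ℤ) (i : Fin 3) :
    fieldFourierCoeff u k i = torusFourierCoeff (fun x => (u x i : ℂ)) k :=
  (torusFourierCoeff_clm_comp (ContinuousLinearMap.proj (R := ℂ) i)
    (integrableOn_ofReal_field hu) k).symm

theorem fieldFourierCoeff_const_smul (c : ℝ) (u : E3 → E3) (k : Fin 3 → ℤ) :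
    fieldFourierCoeff (fun x => c • u x) k = (c : ℂ) • fieldFourierCoeff u k := by
  rw [fieldFourierCoeff, fieldFourierCoeff, ← torusFourierCoeff_const_smul]
  simp only [Pi.smul_def, smul_eq_mul, ofReal_mul]

theorem fieldFourierCoeff_cross_const (hu : IntegrableOn u T3) (e : E3) (k : Fin 3 → ℤ) :
    fieldFourierCoeff (fun x => u x ⨯₃ e) k = fieldFourierCoeff u k ⨯₃ fun i => (e i : ℂ) := by
  rw [fieldFourierCoeff, funext fun x => ofReal_cross (u x) e]
  exact torusFourierCoeff_clm_comp
    (LinearMap.toContinuousLinearMap (crossProduct.flip fun i => (e i : ℂ)))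
    (integrableOn_ofReal_field hu) k

theorem exists_fieldFourierCoeff_ne_zero (hu : Continuous u) (hper : SpacePeriodic u)
    (hne : ∃ x, u x ≠ 0) : ∃ k, fieldFourierCoeff u k ≠ 0 := by
  obtain ⟨x, hx⟩ := hne
  obtain ⟨i, hi⟩ := Function.ne_iff.mp hx
  refine exists_torusFourierCoeff_ne_zero (by fun_prop)
    (fun j => (hper.periodic_single j).comp fun v i => (v i : ℂ)) ⟨x, Function.ne_iff.mpr ⟨i, ?_⟩⟩
  exact ofReal_ne_zero.mpr hi

theorem fderiv_ofReal_comp_apply {V : Type*} [NormedAddCommGroup V] [NormedSpace ℝ V] {f : V → ℝ}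
    {x : V} (hf : DifferentiableAt ℝ f x) (v : V) :
    fderiv ℝ (fun y => (f y : ℂ)) x v = fderiv ℝ f x v := by
  have h : HasFDerivAt (fun y => (f y : ℂ)) (ofRealCLM ∘L fderiv ℝ f x) x :=
    ofRealCLM.hasFDerivAt.comp x hf.hasFDerivAt
  simp [h.fderiv]

theorem torusFourierCoeff_vdiv (hu : Differentiable ℝ u) (hper : SpacePeriodic u)
    (hdiv : IntegrableOn (vdiv u) T3) (k : Fin 3 → ℤ) :
    torusFourierCoeff (fun x => (vdiv u x : ℂ)) k =
      (fun i => I * k i) ⬝ᵥ fieldFourierCoeff u k := by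
  have hui : ∀ i, Differentiable ℝ fun x => u x i := differentiable_pi.mp hu
  have hdiv_eq : (fun x => (vdiv u x : ℂ)) =
      fun x => ∑ i, fderiv ℝ (fun y => (u y i : ℂ)) x (Pi.single i 1) := by
    funext x
    simp only [vdiv, pd, ofReal_sum, fderiv_ofReal_comp_apply (hui _ x)]
  rw [hdiv_eq, torusFourierCoeff_divergence (V := fun i y => (u y i : ℂ))
    (fun i => ofRealCLM.differentiable.comp (hui i))
    (fun i => (hper.periodic_single i).comp fun v => (v i : ℂ)) (hdiv_eq ▸ hdiv.ofReal)]
  exact Finset.sum_congr rfl fun i _ => by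
    rw [fieldFourierCoeff_apply hu.continuous.integrableOn_Icc, smul_eq_mul]

theorem fieldFourierCoeff_vcurl (hu : Differentiable ℝ u) (hper : SpacePeriodic u)
    (hcurl : IntegrableOn (vcurl u) T3) (k : Fin 3 → ℤ) :
    fieldFourierCoeff (vcurl u) k = (fun i => I * k i) ⨯₃ fieldFourierCoeff u k := by
  ext j
  let e : E3 := Pi.single j 1
  have he : (fun i => (e i : ℂ)) = Pi.single j 1 := by
    ext i
    simp [e, Pi.single_apply, apply_ite]
  have hdiv : vdiv (fun x => u x ⨯₃ e) = fun x => vcurl u x j := by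
    funext x
    rw [vdiv_cross_const (hu x), single_one_dotProduct]
  have hper' : SpacePeriodic fun x => u x ⨯₃ e := fun x i => by simp only [hper x i]
  calc fieldFourierCoeff (vcurl u) k j
      = torusFourierCoeff (fun x => (vdiv (fun y => u y ⨯₃ e) x : ℂ)) k := by
        rw [hdiv, fieldFourierCoeff_apply hcurl]
    _ = (fun i => I * k i) ⬝ᵥ fieldFourierCoeff (fun x => u x ⨯₃ e) k :=
        torusFourierCoeff_vdiv (differentiable_cross_const hu e) hper'
          (hdiv ▸ Integrable.eval hcurl j) k
    _ = ((fun i => I * k i) ⨯₃ fieldFourierCoeff u k) j := by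
        rw [fieldFourierCoeff_cross_const hu.continuous.integrableOn_Icc, he,
          ← triple_product_permutation, single_one_dotProduct]

end VectorField

end FourierCoefficients

theorem curl_eigenvalue_is_lattice_norm_general
    {lam : ℝ} (hlam : lam ≠ 0) {W : E3 → E3} (hW : Differentiable ℝ W) (hper : SpacePeriodic W)
    (hnz : ∃ x, W x ≠ 0) (hBel : ∀ x, vcurl W x = lam • W x) :
    ∃ k : Fin 3 → ℤ, k ≠ 0 ∧ lam ^ 2 = ∑ i, (k i : ℝ) ^ 2 := by
  obtain ⟨k, hk⟩ := exists_fieldFourierCoeff_ne_zero hW.continuous hper hnz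
  have hcurl : vcurl W = fun x => lam • W x := funext hBel
  have hcurl_int : IntegrableOn (vcurl W) T3 := by
    rw [hcurl]
    exact (hW.continuous.const_smul lam).integrableOn_Icc
  have hsymbol := fieldFourierCoeff_vcurl hW hper hcurl_int k
  rw [hcurl, fieldFourierCoeff_const_smul] at hsymbol
  have hsq := sq_eq_neg_dotProduct_self_of_cross_eq_smul (Complex.ofReal_ne_zero.mpr hlam) hk
    hsymbol.symm
  have hnorm : lam ^ 2 = ∑ i, (k i : ℝ) ^ 2 := by
    rw [← Complex.ofReal_inj]
    simpa [dotProduct, ← sq, mul_pow] using hsq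
  refine ⟨k, ?_, hnorm⟩
  rintro rfl
  exact hlam (by simpa using hnorm)

/-- the nonzero eigenvalues of the curl operator on `𝕋³` are of the form
`±|k|` with `k ∈ ℤ³`. -/
theorem curl_eigenvalue_is_lattice_norm
    (lam : ℝ) (hlam : lam ≠ 0) (W : E3 → E3)
    (hW : ContDiff ℝ (⊤ : ℕ∞) W) (hper : SpacePeriodic W)
    (hnz : ∃ x, W x ≠ 0)
    (hBel : ∀ x, vcurl W x = lam • W x) :
    ∃ k : Fin 3 → ℤ, k ≠ 0 ∧ lam ^ 2 = ∑ i, (k i : ℝ) ^ 2 :=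
  curl_eigenvalue_is_lattice_norm_general hlam (hW.differentiable (by simp)) hper hnz hBel
end
end
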